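/- Let H be a bipartite simple graph with finitely many edges such that every support vertex of H has degree at least 3. If a graph H' with H' ≠ H can be obtained from H by a finite sequence of operations (I), (II), (III), (I'), (II'), (III'), then H' has strictly more edges than H. -/

import Mathlib

open SimpleGraph

/-- Operation (I): add a pendant edge joining a support vertex `v` of `H`
to an isolated vertex `w` of `H`. -/
def OpI (H H' : SimpleGraph ℕ) : Prop :=
  ∃ v w : ℕ, v ∈ H.support ∧ w ∉ H.support ∧ H' = H ⊔ edge v w

/-- Operation (II): subdivide an edge `uv` of `H` using two distinct isolated
vertices `p, q` of `H`, i.e. delete `uv` and add the edges `up`, `pq`, `qv`. -/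
def OpII (H H' : SimpleGraph ℕ) : Prop :=
  ∃ u v p q : ℕ, H.Adj u v ∧ p ∉ H.support ∧ q ∉ H.support ∧ p ≠ q ∧
    H' = H.deleteEdges {s(u, v)} ⊔ edge u p ⊔ edge p q ⊔ edge q v

/-- Operation (III): for vertices `x, y` of `H` that are non-adjacent and have a
common neighbor `z`, add a new isolated vertex `w` of `H` together with the
edges `xw` and `wy`. -/
def OpIII (H H' : SimpleGraph ℕ) : Prop :=
  ∃ x y z w : ℕ, x ≠ y ∧ ¬ H.Adj x y ∧ H.Adj x z ∧ H.Adj y z ∧ w ∉ H.support ∧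
    H' = H ⊔ edge x w ⊔ edge w y

/-- One of the forward operations (I), (II), (III). -/
def OpFwd (H H' : SimpleGraph ℕ) : Prop := OpI H H' ∨ OpII H H' ∨ OpIII H H'

/-- One of the six operations (I), (II), (III), (I'), (II'), (III'):
the inverse operations are those whose inverse is a forward operation. -/
def OpAny (H H' : SimpleGraph ℕ) : Prop := OpFwd H H' ∨ OpFwd H' H

def gdel (G : SimpleGraph ℕ) (w : ℕ) : SimpleGraph ℕ where
  Adj a b := G.Adj a b ∧ a ≠ w ∧ b ≠ w
  symm := ⟨fun _ _ h => ⟨h.1.symm, h.2.2, h.2.1⟩⟩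
  loopless := ⟨fun _ h => G.loopless.irrefl _ h.1⟩

def gcon (G : SimpleGraph ℕ) (u p q v : ℕ) : SimpleGraph ℕ where
  Adj a b := (G.Adj a b ∧ a ≠ p ∧ a ≠ q ∧ b ≠ p ∧ b ≠ q) ∨
    (a ≠ b ∧ ((a = u ∧ b = v) ∨ (a = v ∧ b = u)))
  symm := ⟨fun _ _ h => by
    rcases h with h | h
    · exact Or.inl ⟨h.1.symm, h.2.2.2.1, h.2.2.2.2, h.2.1, h.2.2.1⟩
    · exact Or.inr ⟨h.1.symm, by tauto⟩⟩
  loopless := ⟨fun _ h => by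
    rcases h with h | h
    · exact G.loopless.irrefl _ h.1
    · exact h.1 rfl⟩

theorem gdel_adj (G : SimpleGraph ℕ) (w a b : ℕ) :
    (gdel G w).Adj a b ↔ G.Adj a b ∧ a ≠ w ∧ b ≠ w := Iff.rfl

theorem gcon_adj (G : SimpleGraph ℕ) (u p q v a b : ℕ) :
    (gcon G u p q v).Adj a b ↔ (G.Adj a b ∧ a ≠ p ∧ a ≠ q ∧ b ≠ p ∧ b ≠ q) ∨
    (a ≠ b ∧ ((a = u ∧ b = v) ∨ (a = v ∧ b = u))) := Iff.rfl

structure LeafR (G : SimpleGraph ℕ) (v w : ℕ) : Prop where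
  ex : ∃ t, t ≠ w ∧ G.Adj v t
  hw : ∀ t, G.Adj w t ↔ t = v

structure PathR (G : SimpleGraph ℕ) (u p q v : ℕ) : Prop where
  hp : ∀ t, G.Adj p t ↔ t = u ∨ t = q
  hq : ∀ t, G.Adj q t ↔ t = p ∨ t = v
  huq : u ≠ q
  hpv : p ≠ v
  huv : u ≠ v
  hn : ¬ G.Adj u v

structure TwinR (G : SimpleGraph ℕ) (x y z w : ℕ) : Prop where
  hxy : x ≠ y
  hn : ¬ G.Adj x y
  hx : G.Adj x z
  hy : G.Adj y z
  hz : z ≠ w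
  hw : ∀ t, G.Adj w t ↔ t = x ∨ t = y

theorem opI_iff (A G : SimpleGraph ℕ) : OpI A G ↔ ∃ v w, LeafR G v w ∧ A = gdel G w := by
  constructor
  · rintro ⟨v, w, hv, hw, rfl⟩
    obtain ⟨t, ht⟩ := hv
    change A.Adj v t at ht
    have hw' : ∀ t, ¬ A.Adj w t := fun t h => hw ⟨t, h⟩
    have hw2 : ∀ t, ¬ A.Adj t w := fun t h => hw ⟨t, h.symm⟩
    refine ⟨v, w, ⟨⟨t, ?_, ?_⟩, ?_⟩, ?_⟩
    · grind
    · simp [ht]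
    · intro t; simp only [sup_adj, edge_adj]; grind
    · ext a b; simp only [gdel_adj, sup_adj, edge_adj]; grind
  · rintro ⟨v, w, ⟨⟨t, htw, ht⟩, hw⟩, rfl⟩
    have hs := fun a b => G.adj_comm a b
    have hl := fun a => G.irrefl (v := a)
    refine ⟨v, w, ⟨t, ?_⟩, ?_, ?_⟩
    · change (gdel G w).Adj v t; rw [gdel_adj]; grind
    · rintro ⟨t, h⟩; change (gdel G w).Adj w t at h; rw [gdel_adj] at h; grind
    · ext a b; simp only [gdel_adj, sup_adj, edge_adj]; grind

theorem opIII_iff (A G : SimpleGraph ℕ) :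
    OpIII A G ↔ ∃ x y z w, TwinR G x y z w ∧ A = gdel G w := by
  constructor
  · rintro ⟨x, y, z, w, hxy, hn, hx, hy, hw, rfl⟩
    have hw' : ∀ t, ¬ A.Adj w t := fun t h => hw ⟨t, h⟩
    have hw2 : ∀ t, ¬ A.Adj t w := fun t h => hw ⟨t, h.symm⟩
    refine ⟨x, y, z, w, ⟨hxy, ?_, ?_, ?_, ?_, ?_⟩, ?_⟩
    · simp only [sup_adj, edge_adj]; grind
    · simp [hx]
    · simp [hy]
    · grind
    · intro t; simp only [sup_adj, edge_adj]; grind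
    · ext a b; simp only [gdel_adj, sup_adj, edge_adj]; grind
  · rintro ⟨x, y, z, w, ⟨hxy, hn, hx, hy, hz, hw⟩, rfl⟩
    have hs := fun a b => G.adj_comm a b
    have hl := fun a => G.irrefl (v := a)
    refine ⟨x, y, z, w, hxy, ?_, ?_, ?_, ?_, ?_⟩
    · rw [gdel_adj]; grind
    · rw [gdel_adj]; grind
    · rw [gdel_adj]; grind
    · rintro ⟨t, h⟩; change (gdel G w).Adj w t at h; rw [gdel_adj] at h; grind
    · ext a b; simp only [gdel_adj, sup_adj, edge_adj]; grind

theorem opII_iff (A G : SimpleGraph ℕ) :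
    OpII A G ↔ ∃ u p q v, PathR G u p q v ∧ A = gcon G u p q v := by
  constructor
  · rintro ⟨u, v, p, q, huv, hp, hq, hpq, rfl⟩
    have hp1 : ∀ t, ¬ A.Adj p t := fun t h => hp ⟨t, h⟩
    have hp2 : ∀ t, ¬ A.Adj t p := fun t h => hp ⟨t, h.symm⟩
    have hq1 : ∀ t, ¬ A.Adj q t := fun t h => hq ⟨t, h⟩
    have hq2 : ∀ t, ¬ A.Adj t q := fun t h => hq ⟨t, h.symm⟩
    have hs := fun a b => A.adj_comm a b
    have hne := huv.ne
    have e : ∀ a b, (A.deleteEdges {s(u, v)} ⊔ edge u p ⊔ edge p q ⊔ edge q v).Adj a b ↔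
      (A.Adj a b ∧ ¬ ((a = u ∧ b = v) ∨ (a = v ∧ b = u))) ∨ (a = u ∧ b = p) ∨ (a = p ∧ b = u)
        ∨ (a = p ∧ b = q) ∨ (a = q ∧ b = p) ∨ (a = q ∧ b = v) ∨ (a = v ∧ b = q) := by
      intro a b
      simp only [sup_adj, edge_adj, deleteEdges_adj, Set.mem_singleton_iff, Sym2.eq_iff]
      grind
    refine ⟨u, p, q, v, ⟨?_, ?_, ?_, ?_, hne, ?_⟩, ?_⟩
    · intro t; rw [e]; grind
    · intro t; rw [e]; grind
    · grind
    · grind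
    · rw [e]; grind
    · ext a b; rw [gcon_adj, e]; grind
  · rintro ⟨u, p, q, v, ⟨hp, hq, huq, hpv, huv, hn⟩, rfl⟩
    have hs := fun a b => G.adj_comm a b
    have hl := fun a => G.irrefl (v := a)
    have pu := (hp _).2 (Or.inl rfl)
    have pq := (hp _).2 (Or.inr rfl)
    have qv := (hq _).2 (Or.inr rfl)
    refine ⟨u, v, p, q, ?_, ?_, ?_, ?_, ?_⟩
    · rw [gcon_adj]; grind
    · rintro ⟨t, h⟩; change (gcon G u p q v).Adj _ t at h; rw [gcon_adj] at h; grind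
    · rintro ⟨t, h⟩; change (gcon G u p q v).Adj _ t at h; rw [gcon_adj] at h; grind
    · grind
    · ext a b
      simp only [sup_adj, edge_adj, deleteEdges_adj, Set.mem_singleton_iff, Sym2.eq_iff, gcon_adj]
      grind

theorem LeafR.op {G v w} (h : LeafR G v w) : OpFwd (gdel G w) G :=
  Or.inl ((opI_iff _ _).2 ⟨v, w, h, rfl⟩)
theorem PathR.op {G u p q v} (h : PathR G u p q v) : OpFwd (gcon G u p q v) G :=
  Or.inr (Or.inl ((opII_iff _ _).2 ⟨u, p, q, v, h, rfl⟩))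
theorem TwinR.op {G x y z w} (h : TwinR G x y z w) : OpFwd (gdel G w) G :=
  Or.inr (Or.inr ((opIII_iff _ _).2 ⟨x, y, z, w, h, rfl⟩))

theorem opFwd_cases {A G : SimpleGraph ℕ} (h : OpFwd A G) :
    (∃ v w, LeafR G v w ∧ A = gdel G w) ∨ (∃ u p q v, PathR G u p q v ∧ A = gcon G u p q v) ∨
    (∃ x y z w, TwinR G x y z w ∧ A = gdel G w) := by
  rw [← opI_iff, ← opII_iff, ← opIII_iff]; exact h

theorem PathR.symm {G u p q v} (h : PathR G u p q v) : PathR G v q p u := by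
  obtain ⟨hp, hq, huq, hpv, huv, hn⟩ := h
  have pu := (hp _).2 (Or.inl rfl)
  have pq := (hp _).2 (Or.inr rfl)
  have qv := (hq _).2 (Or.inr rfl)
  exact ⟨fun t => (hq t).trans or_comm, fun t => (hp t).trans or_comm, hpv.symm, huq.symm,
    huv.symm, fun h => hn h.symm⟩

theorem gcon_symm (G u p q v) : gcon G u p q v = gcon G v q p u := by
  ext a b; simp only [gcon_adj]; tauto

theorem TwinR.symm {G x y z w} (h : TwinR G x y z w) : TwinR G y x z w := by
  obtain ⟨hxy, hn, hx, hy, hz, hw⟩ := h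
  have fx := (hw _).2 (Or.inl rfl)
  have fy := (hw _).2 (Or.inr rfl)
  exact ⟨hxy.symm, fun h => hn h.symm, hy, hx, hz, fun t => (hw t).trans or_comm⟩

def Big (G : SimpleGraph ℕ) (a : ℕ) : Prop :=
  ∃ r s t, r ≠ s ∧ r ≠ t ∧ s ≠ t ∧ G.Adj a r ∧ G.Adj a s ∧ G.Adj a t

def Bip (G : SimpleGraph ℕ) : Prop := ∃ c : ℕ → Bool, ∀ a b, G.Adj a b → c a ≠ c b

def Join (G A B : SimpleGraph ℕ) : Prop :=
  ∃ (A' B' : SimpleGraph ℕ) (σ : Equiv.Perm ℕ), Relation.ReflTransGen OpFwd A' A ∧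
    Relation.ReflTransGen OpFwd B' B ∧ (∀ a, Big G a → σ a = a) ∧ A' = B'.comap σ

theorem Join.symm {G A B} (h : Join G A B) : Join G B A := by
  obtain ⟨A', B', σ, h1, h2, h3, h4⟩ := h
  refine ⟨B', A', σ.symm, h2, h1, fun a ha => ?_, ?_⟩
  · rw [Equiv.symm_apply_eq, h3 a ha]
  · subst h4; ext a b; simp

theorem join_refl (G A) : Join G A A :=
  ⟨A, A, 1, .refl, .refl, fun _ _ => rfl, by ext; simp⟩

theorem join_common {G A B D} (h1 : OpFwd D A) (h2 : OpFwd D B) : Join G A B :=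
  ⟨D, D, 1, .single h1, .single h2, fun _ _ => rfl, by ext; simp⟩

theorem join_AA {G v w v' w'} (h : LeafR G v w) (h' : LeafR G v' w') :
    Join G (gdel G w) (gdel G w') := by
  have hs := fun a b => G.adj_comm a b
  have hl := fun a => G.irrefl (v := a)
  by_cases e : w = w'
  · subst e; exact join_refl _ _
  by_cases k : ∃ t, t ≠ w ∧ t ≠ w' ∧ G.Adj v t ∧ v = v'
  · obtain ⟨t, t1, t2, t3, rfl⟩ := k
    obtain ⟨_, hw⟩ := h
    have fw := (hw _).2 rfl
    obtain ⟨_, hw'⟩ := h'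
    have fw' := (hw' _).2 rfl
    have a1 : LeafR (gdel G w) v w' := ⟨⟨t, t2, by rw [gdel_adj]; grind⟩,
      fun s => by rw [gdel_adj]; grind⟩
    have a2 : LeafR (gdel G w') v w := ⟨⟨t, t1, by rw [gdel_adj]; grind⟩,
      fun s => by rw [gdel_adj]; grind⟩
    refine join_common a1.op ?_
    convert a2.op using 1
    ext a b; simp only [gdel_adj]; tauto
  by_cases k2 : v = v'
  · subst k2
    obtain ⟨_, hw⟩ := h
    have fw := (hw _).2 rfl
    obtain ⟨_, hw'⟩ := h'
    have fw' := (hw' _).2 rfl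
    refine ⟨_, _, Equiv.swap w w', .refl, .refl, ?_, ?_⟩
    · rintro a ⟨r, s, t, h⟩; rw [Equiv.swap_apply_def]; grind
    · ext a b; simp only [comap_adj, gdel_adj, Equiv.swap_apply_def]; grind
  · obtain ⟨⟨t, ht, htv⟩, hw⟩ := h
    have fw := (hw _).2 rfl
    obtain ⟨⟨t', ht', htv'⟩, hw'⟩ := h'
    have fw' := (hw' _).2 rfl
    have a1 : LeafR (gdel G w) v' w' := ⟨⟨t', ht', by rw [gdel_adj]; grind⟩,
      fun s => by rw [gdel_adj]; grind⟩
    have a2 : LeafR (gdel G w') v w := ⟨⟨t, ht, by rw [gdel_adj]; grind⟩,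
      fun s => by rw [gdel_adj]; grind⟩
    refine join_common a1.op ?_
    convert a2.op using 1
    ext a b; simp only [gdel_adj]; tauto

theorem join_AB_end {G v w p q v'} (h : LeafR G v w) (h' : PathR G w p q v') :
    Join G (gdel G w) (gcon G w p q v') := by
  have hs := fun a b => G.adj_comm a b
  have hl := fun a => G.irrefl (v := a)
  obtain ⟨_, hw⟩ := h
  have fw := (hw _).2 rfl
  obtain ⟨hp, hq, huq, hpv, huv, hn⟩ := h'
  have pu := (hp _).2 (Or.inl rfl)
  have pq := (hp _).2 (Or.inr rfl)
  have qv := (hq _).2 (Or.inr rfl)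
  have a1 : LeafR (gdel G w) q p := ⟨⟨v', by grind, by rw [gdel_adj]; grind⟩,
      fun s => by rw [gdel_adj]; grind⟩
  refine ⟨_, _, Equiv.swap w q, .single a1.op, .refl, ?_, ?_⟩
  · rintro a ⟨r, s, t, h⟩; rw [Equiv.swap_apply_def]; grind
  · ext a b; simp only [comap_adj, gdel_adj, gcon_adj, Equiv.swap_apply_def]; grind

theorem join_AB {G v w u p q v'} (h : LeafR G v w) (h' : PathR G u p q v') :
    Join G (gdel G w) (gcon G u p q v') := by
  have hs := fun a b => G.adj_comm a b
  have hl := fun a => G.irrefl (v := a)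
  by_cases e : w = u
  · subst e; exact join_AB_end h h'
  by_cases e' : w = v'
  · subst e'; rw [gcon_symm]; exact join_AB_end h h'.symm
  obtain ⟨⟨t, ht, htv⟩, hw⟩ := h
  have fw := (hw _).2 rfl
  obtain ⟨hp, hq, huq, hpv, huv, hn⟩ := h'
  have pu := (hp _).2 (Or.inl rfl)
  have pq := (hp _).2 (Or.inr rfl)
  have qv := (hq _).2 (Or.inr rfl)
  have a1 : PathR (gdel G w) u p q v' := ⟨fun s => by rw [gdel_adj]; grind,
    fun s => by rw [gdel_adj]; grind, huq, hpv, huv, by rw [gdel_adj]; grind⟩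
  have a2 : LeafR (gcon G u p q v') v w := by
    refine ⟨?_, fun s => by rw [gcon_adj]; grind⟩
    by_cases k : t = p
    · exact ⟨v', by grind, by rw [gcon_adj]; grind⟩
    by_cases k : t = q
    · exact ⟨u, by grind, by rw [gcon_adj]; grind⟩
    exact ⟨t, ht, by rw [gcon_adj]; grind⟩
  refine join_common a1.op ?_
  convert a2.op using 1
  ext a b; simp only [gdel_adj, gcon_adj]; grind

theorem join_AC {G v w x y z w'} (h : LeafR G v w) (h' : TwinR G x y z w') :
    Join G (gdel G w) (gdel G w') := by
  have hs := fun a b => G.adj_comm a b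
  have hl := fun a => G.irrefl (v := a)
  obtain ⟨⟨t, ht, htv⟩, hw⟩ := h
  have fw := (hw _).2 rfl
  obtain ⟨hxy, hn, hx, hy, hz, hw'⟩ := h'
  have fx' := (hw' _).2 (Or.inl rfl)
  have fy' := (hw' _).2 (Or.inr rfl)
  have a1 : TwinR (gdel G w) x y z w' := ⟨hxy, by rw [gdel_adj]; grind, by rw [gdel_adj]; grind,
    by rw [gdel_adj]; grind, hz, fun s => by rw [gdel_adj]; grind⟩
  have a2 : LeafR (gdel G w') v w := by
    refine ⟨?_, fun s => by rw [gdel_adj]; grind⟩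
    by_cases k : t = w'
    · exact ⟨z, by grind, by rw [gdel_adj]; grind⟩
    exact ⟨t, ht, by rw [gdel_adj]; grind⟩
  refine join_common a1.op ?_
  convert a2.op using 1
  ext a b; simp only [gdel_adj]; tauto

theorem join_BC {G u p q v x y z w} (hb : Bip G) (h : PathR G u p q v) (h' : TwinR G x y z w) :
    Join G (gcon G u p q v) (gdel G w) := by
  have hs := fun a b => G.adj_comm a b
  have hl := fun a => G.irrefl (v := a)
  obtain ⟨c, hc⟩ := hb
  obtain ⟨hp, hq, huq, hpv, huv, hn'⟩ := h
  have pu := (hp _).2 (Or.inl rfl)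
  have pq := (hp _).2 (Or.inr rfl)
  have qv := (hq _).2 (Or.inr rfl)
  obtain ⟨hxy, hn, hx, hy, hz, hw⟩ := h'
  have fx := (hw _).2 (Or.inl rfl)
  have fy := (hw _).2 (Or.inr rfl)
  have c1 : c x = c y := by
    have k1 := hc _ _ hx
    have k2 := hc _ _ hy
    revert k1 k2
    cases c x <;> cases c y <;> cases c z <;> simp
  have c2 : c u ≠ c v := by
    have k1 := hc _ _ pu
    have k2 := hc _ _ pq
    have k3 := hc _ _ qv
    revert k1 k2 k3
    cases c u <;> cases c v <;> cases c p <;> cases c q <;> simp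
  clear hc
  have e1 : w ≠ p := by grind
  have e2 : w ≠ q := by grind
  have e3 : x ≠ p ∧ x ≠ q ∧ y ≠ p ∧ y ≠ q := by grind
  have e4 : z ≠ p ∧ z ≠ q := by grind
  have e5 : w ≠ u ∧ w ≠ v := by grind
  have a1 : TwinR (gcon G u p q v) x y z w := ⟨hxy, by rw [gcon_adj]; grind,
    by rw [gcon_adj]; grind, by rw [gcon_adj]; grind, hz, fun s => by rw [gcon_adj]; grind⟩
  have a2 : PathR (gdel G w) u p q v := ⟨fun s => by rw [gdel_adj]; grind,
    fun s => by rw [gdel_adj]; grind, huq, hpv, huv, by rw [gdel_adj]; grind⟩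
  refine join_common a1.op ?_
  convert a2.op using 1
  ext a b; simp only [gdel_adj, gcon_adj]; grind

theorem join_CC {G x y z w x' y' z' w'} (h : TwinR G x y z w) (h' : TwinR G x' y' z' w') :
    Join G (gdel G w) (gdel G w') := by
  have hs := fun a b => G.adj_comm a b
  have hl := fun a => G.irrefl (v := a)
  by_cases e : w = w'
  · subst e; exact join_refl _ _
  by_cases e1 : G.Adj w w'
  · have key : ∃ x y z, TwinR G x y z w ∧ w' = x := by
      rcases (h.hw w').1 e1 with k | k
      · exact ⟨_, _, _, h, k⟩
      · exact ⟨_, _, _, h.symm, k⟩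
    clear h
    obtain ⟨x, y, z, h, rfl⟩ := key
    obtain ⟨hxy, hn, hx, hy, hz, hw⟩ := h
    have fx := (hw _).2 (Or.inl rfl)
    have fy := (hw _).2 (Or.inr rfl)
    obtain ⟨hxy', hn', hx', hy', hz', hw'⟩ := h'
    have fx' := (hw' _).2 (Or.inl rfl)
    have fy' := (hw' _).2 (Or.inr rfl)
    have a1 : LeafR (gdel G w) z w' := by
      refine ⟨⟨y, by grind, by rw [gdel_adj]; grind⟩, fun s => by rw [gdel_adj]; grind⟩
    have a2 : LeafR (gdel G w') y w := by
      refine ⟨⟨z, by grind, by rw [gdel_adj]; grind⟩, fun s => by rw [gdel_adj]; grind⟩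
    refine join_common a1.op ?_
    convert a2.op using 1
    ext a b; simp only [gdel_adj]; tauto
  obtain ⟨hxy, hn, hx, hy, hz, hw⟩ := h
  have fx := (hw _).2 (Or.inl rfl)
  have fy := (hw _).2 (Or.inr rfl)
  obtain ⟨hxy', hn', hx', hy', hz', hw'⟩ := h'
  have fx' := (hw' _).2 (Or.inl rfl)
  have fy' := (hw' _).2 (Or.inr rfl)
  by_cases e2 : (x = x' ∧ y = y') ∨ (x = y' ∧ y = x')
  · refine ⟨_, _, Equiv.swap w w', .refl, .refl, ?_, ?_⟩
    · rintro a ⟨r, s, t, h⟩; rw [Equiv.swap_apply_def]; grind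
    · ext a b; simp only [comap_adj, gdel_adj, Equiv.swap_apply_def]; grind
  · have a1 : TwinR (gdel G w) x' y' z' w' := ⟨hxy', by rw [gdel_adj]; grind,
      by rw [gdel_adj]; grind, by rw [gdel_adj]; grind, hz', fun s => by rw [gdel_adj]; grind⟩
    have a2 : TwinR (gdel G w') x y z w := ⟨hxy, by rw [gdel_adj]; grind,
      by rw [gdel_adj]; grind, by rw [gdel_adj]; grind, hz, fun s => by rw [gdel_adj]; grind⟩
    refine join_common a1.op ?_
    convert a2.op using 1
    ext a b; simp only [gdel_adj]; tauto

theorem join_BB_over {G u p q v u' q' v'} (h : PathR G u p q v) (h' : PathR G u' q q' v') :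
    Join G (gcon G u p q v) (gcon G u' q q' v') := by
  have hs := fun a b => G.adj_comm a b
  have hl := fun a => G.irrefl (v := a)
  obtain ⟨hp, hq, huq, hpv, huv, hn⟩ := h
  have pu := (hp _).2 (Or.inl rfl)
  have pq := (hp _).2 (Or.inr rfl)
  have qv := (hq _).2 (Or.inr rfl)
  obtain ⟨hp', hq', huq', hpv', huv', hn'⟩ := h'
  have pu' := (hp' _).2 (Or.inl rfl)
  have pq' := (hp' _).2 (Or.inr rfl)
  have qv' := (hq' _).2 (Or.inr rfl)
  by_cases e : q' = p
  · have : u' = v ∧ v' = u := by grind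
    obtain ⟨rfl, rfl⟩ := this
    subst e
    rw [gcon_symm]; exact join_refl _ _
  have : q' = v ∧ u' = p := by grind
  obtain ⟨rfl, rfl⟩ := this
  refine ⟨_, _, Equiv.swap u' q', .refl, .refl, ?_, ?_⟩
  · rintro a ⟨r, s, t, h⟩; rw [Equiv.swap_apply_def]; grind
  · ext a b; simp only [comap_adj, gcon_adj, Equiv.swap_apply_def]; grind

theorem swap2 {p q p' q' a : ℕ} (h1 : p ≠ q) (h2 : p' ≠ q') (h3 : p ≠ p') (h4 : p ≠ q')
    (h5 : q ≠ p') (h6 : q ≠ q') : (Equiv.swap p p' * Equiv.swap q q') a =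
    if a = p then p' else if a = p' then p else if a = q then q' else if a = q' then q else a := by
  simp only [Equiv.Perm.mul_apply, Equiv.swap_apply_def]; grind

theorem join_BB_adj {G u p q u' p' q' v'} (hb : Bip G)
    (h : PathR G u p q p') (h' : PathR G u' p' q' v')
    (d1 : p ≠ p') (d2 : p ≠ q') (d3 : q ≠ p') (d4 : q ≠ q') :
    Join G (gcon G u p q p') (gcon G u' p' q' v') := by
  have hs := fun a b => G.adj_comm a b
  have hl := fun a => G.irrefl (v := a)
  obtain ⟨c, hc⟩ := hb
  obtain ⟨hp, hq, huq, hpv, huv, hn⟩ := h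
  have pu := (hp _).2 (Or.inl rfl)
  have pq := (hp _).2 (Or.inr rfl)
  have qv := (hq _).2 (Or.inr rfl)
  obtain ⟨hp', hq', huq', hpv', huv', hn'⟩ := h'
  have pu' := (hp' _).2 (Or.inl rfl)
  have pq' := (hp' _).2 (Or.inr rfl)
  have qv' := (hq' _).2 (Or.inr rfl)
  have : u' = q := by grind
  subst this
  have c2 : u ≠ v' := by
    rintro rfl
    have k1 := hc _ _ pu
    have k2 := hc p u' (by grind)
    have k3 := hc u' p' (by grind)
    have k4 := hc p' q' (by grind)
    have k5 := hc q' u (by grind)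
    revert k1 k2 k3 k4 k5
    cases c u <;> cases c p <;> cases c u' <;> cases c p' <;> cases c q' <;> simp
  clear hc
  have hpq : p ≠ u' := by grind
  have hpq' : p' ≠ q' := by grind
  refine ⟨_, _, Equiv.swap p p' * Equiv.swap u' q', .refl, .refl, ?_, ?_⟩
  · rintro a ⟨r, s, t, h⟩; rw [swap2 hpq hpq' d1 d2 d3 d4]; grind
  · ext a b; simp only [comap_adj, gcon_adj, swap2 hpq hpq' d1 d2 d3 d4]; grind

theorem join_BB_par {G u p q p' q' v}
    (h : PathR G u p q v) (h' : PathR G u p' q' v)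
    (d1 : p ≠ p') (d2 : p ≠ q') (d3 : q ≠ p') (d4 : q ≠ q') :
    Join G (gcon G u p q v) (gcon G u p' q' v) := by
  have hs := fun a b => G.adj_comm a b
  have hl := fun a => G.irrefl (v := a)
  obtain ⟨hp, hq, huq, hpv, huv, hn⟩ := h
  have pu := (hp _).2 (Or.inl rfl)
  have pq := (hp _).2 (Or.inr rfl)
  have qv := (hq _).2 (Or.inr rfl)
  obtain ⟨hp', hq', huq', hpv', huv', hn'⟩ := h'
  have pu' := (hp' _).2 (Or.inl rfl)
  have pq' := (hp' _).2 (Or.inr rfl)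
  have qv' := (hq' _).2 (Or.inr rfl)
  have hpq : p ≠ q := by grind
  have hpq' : p' ≠ q' := by grind
  refine ⟨_, _, Equiv.swap p p' * Equiv.swap q q', .refl, .refl, ?_, ?_⟩
  · rintro a ⟨r, s, t, h⟩; rw [swap2 hpq hpq' d1 d2 d3 d4]; grind
  · have up : u ≠ p := by grind
    have up' : u ≠ p' := by grind
    have vq : v ≠ q := by grind
    have vq' : v ≠ q' := by grind
    ext a b; simp only [comap_adj, gcon_adj, swap2 hpq hpq' d1 d2 d3 d4]
    by_cases ap : a = p
    · grind
    by_cases aq : a = q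
    · grind
    by_cases bp : b = p
    · grind
    by_cases bq : b = q
    · grind
    by_cases ap' : a = p'
    · grind
    by_cases aq' : a = q'
    · grind
    by_cases bp' : b = p'
    · grind
    by_cases bq' : b = q'
    · grind
    simp only [ap, aq, bp, bq, ap', aq', bp', bq', if_false]
    grind

theorem join_BB {G u p q v u' p' q' v'} (hb : Bip G)
    (h : PathR G u p q v) (h' : PathR G u' p' q' v') :
    Join G (gcon G u p q v) (gcon G u' p' q' v') := by
  have hs := fun a b => G.adj_comm a b
  have hl := fun a => G.irrefl (v := a)
  by_cases d3 : q = p'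
  · subst d3; exact join_BB_over h h'
  by_cases d1 : p = p'
  · subst d1; rw [gcon_symm G u]; exact join_BB_over h.symm h'
  by_cases d4 : q = q'
  · subst d4; rw [gcon_symm G u']; exact join_BB_over h h'.symm
  by_cases d2 : p = q'
  · subst d2; rw [gcon_symm G u, gcon_symm G u']; exact join_BB_over h.symm h'.symm
  by_cases f1 : v = p'
  · subst f1; exact join_BB_adj hb h h' d1 d2 d3 d4
  by_cases f2 : u = p'
  · subst f2; rw [gcon_symm G u]; exact join_BB_adj hb h.symm h' d3 d4 d1 d2
  by_cases f3 : v = q'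
  · subst f3; rw [gcon_symm G u']; exact join_BB_adj hb h h'.symm d2 d1 d4 d3
  by_cases f4 : u = q'
  · subst f4; rw [gcon_symm G u, gcon_symm G u']; exact join_BB_adj hb h.symm h'.symm d4 d3 d2 d1
  by_cases g1 : u = u' ∧ v = v'
  · obtain ⟨rfl, rfl⟩ := g1
    exact join_BB_par h h' d1 d2 d3 d4
  by_cases g2 : u = v' ∧ v = u'
  · obtain ⟨rfl, rfl⟩ := g2
    rw [gcon_symm G v]
    exact join_BB_par h h'.symm d2 d1 d4 d3
  obtain ⟨hp, hq, huq, hpv, huv, hn⟩ := h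
  have pu := (hp _).2 (Or.inl rfl)
  have pq := (hp _).2 (Or.inr rfl)
  have qv := (hq _).2 (Or.inr rfl)
  obtain ⟨hp', hq', huq', hpv', huv', hn'⟩ := h'
  have pu' := (hp' _).2 (Or.inl rfl)
  have pq' := (hp' _).2 (Or.inr rfl)
  have qv' := (hq' _).2 (Or.inr rfl)
  have e : u' ≠ p ∧ u' ≠ q ∧ v' ≠ p ∧ v' ≠ q := by grind
  have a1 : PathR (gcon G u p q v) u' p' q' v' := ⟨fun s => by rw [gcon_adj]; grind,
    fun s => by rw [gcon_adj]; grind, huq', hpv', huv', by rw [gcon_adj]; grind⟩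
  have a2 : PathR (gcon G u' p' q' v') u p q v := ⟨fun s => by rw [gcon_adj]; grind,
    fun s => by rw [gcon_adj]; grind, huq, hpv, huv, by rw [gcon_adj]; grind⟩
  refine join_common a1.op ?_
  convert a2.op using 1
  ext a b; simp only [gcon_adj]; grind

theorem join_all {G A B} (hb : Bip G) (hA : OpFwd A G) (hB : OpFwd B G) : Join G A B := by
  rcases opFwd_cases hA with ⟨v, w, h, rfl⟩ | ⟨u, p, q, v, h, rfl⟩ | ⟨x, y, z, w, h, rfl⟩ <;>
  rcases opFwd_cases hB with ⟨v', w', h', rfl⟩ | ⟨u', p', q', v', h', rfl⟩ |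
    ⟨x', y', z', w', h', rfl⟩
  · exact join_AA h h'
  · exact join_AB h h'
  · exact join_AC h h'
  · exact (join_AB h' h).symm
  · exact join_BB hb h h'
  · exact join_BC hb h h'
  · exact (join_AC h' h).symm
  · exact (join_BC hb h' h).symm
  · exact join_CC h h'

theorem big_mono {A G : SimpleGraph ℕ} (h : OpFwd A G) {a : ℕ} (ha : Big A a) : Big G a := by
  have hs := fun a b => G.adj_comm a b
  have hl := fun a => G.irrefl (v := a)
  obtain ⟨r, s, t, h1, h2, h3, hr, hs', ht⟩ := ha
  rcases opFwd_cases h with ⟨v, w, h, rfl⟩ | ⟨u, p, q, v, hh, rfl⟩ | ⟨x, y, z, w, h, rfl⟩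
  · exact ⟨r, s, t, h1, h2, h3, hr.1, hs'.1, ht.1⟩
  · obtain ⟨hp, hq, huq, hpv, huv, hn⟩ := hh
    have pu := (hp _).2 (Or.inl rfl)
    have pq := (hp _).2 (Or.inr rfl)
    have qv := (hq _).2 (Or.inr rfl)
    simp only [gcon_adj] at hr hs' ht
    let f : ℕ → ℕ := fun i => if a = u ∧ i = v then p else if a = v ∧ i = u then q else i
    refine ⟨f r, f s, f t, ?_, ?_, ?_, ?_, ?_, ?_⟩ <;> simp only [f] <;> grind
  · exact ⟨r, s, t, h1, h2, h3, hr.1, hs'.1, ht.1⟩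

theorem bip_mono {A G : SimpleGraph ℕ} (h : OpFwd A G) (hb : Bip A) : Bip G := by
  obtain ⟨c, hc⟩ := hb
  have hs := fun a b => G.adj_comm a b
  have hl := fun a => G.irrefl (v := a)
  rcases opFwd_cases h with ⟨v, w, ⟨_, hw⟩, rfl⟩ |
    ⟨u, p, q, v, ⟨hp, hq, huq, hpv, huv, hn⟩, rfl⟩ | ⟨x, y, z, w, ⟨hxy, hn, hx, hy, hz, hw⟩, rfl⟩
  · simp only [gdel_adj] at hc
    refine ⟨fun i => if i = w then !(c v) else c i, fun a b hab => ?_⟩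
    grind
  · simp only [gcon_adj] at hc
    have := hc u v (by grind)
    refine ⟨fun i => if i = p then c v else if i = q then c u else c i, fun a b hab => ?_⟩
    grind
  · simp only [gdel_adj] at hc
    have := hc x z (by grind)
    have := hc y z (by grind)
    refine ⟨fun i => if i = w then c z else c i, fun a b hab => ?_⟩
    grind

theorem opFwd_comap {A G : SimpleGraph ℕ} (σ : Equiv.Perm ℕ) (h : OpFwd A G) :
    OpFwd (A.comap σ) (G.comap σ) := by
  have e1 : ∀ a b, σ a = b ↔ a = σ.symm b := fun a b => (Equiv.eq_symm_apply σ).symm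
  have ed : ∀ w, (gdel G w).comap σ = gdel (G.comap σ) (σ.symm w) := by
    intro w; ext a b; simp only [comap_adj, gdel_adj, e1, ne_eq]
  have ec : ∀ u p q v, (gcon G u p q v).comap σ =
      gcon (G.comap σ) (σ.symm u) (σ.symm p) (σ.symm q) (σ.symm v) := by
    intro u p q v; ext a b
    simp only [comap_adj, gcon_adj, e1, ne_eq, Equiv.symm_apply_apply]
  rcases opFwd_cases h with ⟨v, w, ⟨⟨t, ht, hv⟩, hw⟩, rfl⟩ |
    ⟨u, p, q, v, ⟨hp, hq, huq, hpv, huv, hn⟩, rfl⟩ | ⟨x, y, z, w, ⟨hxy, hn, hx, hy, hz, hw⟩, rfl⟩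
  · rw [ed]
    apply LeafR.op (v := σ.symm v)
    refine ⟨⟨σ.symm t, ?_, ?_⟩, fun s => ?_⟩
    · simpa using ht
    · simpa using hv
    · simp [hw, e1]
  · rw [ec]
    apply PathR.op
    refine ⟨fun s => ?_, fun s => ?_, ?_, ?_, ?_, ?_⟩
    · simp [hp, e1]
    · simp [hq, e1]
    · simpa using huq
    · simpa using hpv
    · simpa using huv
    · simpa using hn
  · rw [ed]
    apply TwinR.op (x := σ.symm x) (y := σ.symm y) (z := σ.symm z)
    refine ⟨?_, ?_, ?_, ?_, ?_, fun s => ?_⟩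
    · simpa using hxy
    · simpa using hn
    · simpa using hx
    · simpa using hy
    · simpa using hz
    · simp [hw, e1]

theorem edges_mono {A G : SimpleGraph ℕ} (h : OpFwd A G) (hf : A.edgeSet.Finite) :
    G.edgeSet.Finite ∧ A.edgeSet.ncard < G.edgeSet.ncard := by
  have del : ∀ w t, G.Adj w t → A = gdel G w →
      A.edgeSet ⊂ G.edgeSet := by
    rintro w t hw rfl
    rw [Set.ssubset_iff_of_subset (edgeSet_mono (show gdel G w ≤ G from fun a b h => h.1))]
    refine ⟨s(w, t), hw, fun h => ?_⟩
    rw [mem_edgeSet, gdel_adj] at h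
    exact h.2.1 rfl
  have fin : G.edgeSet.Finite := by
    rcases h with ⟨v, w, hv, hw, rfl⟩ | ⟨u, v, p, q, huv, hp, hq, hpq, rfl⟩ |
      ⟨x, y, z, w, hxy, hn, hx, hy, hw, rfl⟩
    · rw [edgeSet_sup]
      exact hf.union ((Set.finite_singleton s(v, w)).subset (by
        intro e; induction e with | _ a b => simp [edge_adj]; grind))
    · have : ∀ a b : ℕ, (edge a b).edgeSet.Finite := fun v w =>
        ((Set.finite_singleton s(v, w)).subset (by
          intro e; induction e with | _ a b => simp [edge_adj]; grind))
      simp only [edgeSet_sup]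
      exact (((hf.subset (edgeSet_mono (deleteEdges_le _))).union (this _ _)).union
        (this _ _)).union (this _ _)
    · have : ∀ a b : ℕ, (edge a b).edgeSet.Finite := fun v w =>
        ((Set.finite_singleton s(v, w)).subset (by
          intro e; induction e with | _ a b => simp [edge_adj]; grind))
      simp only [edgeSet_sup]
      exact (hf.union (this _ _)).union (this _ _)
  refine ⟨fin, ?_⟩
  rcases opFwd_cases h with ⟨v, w, ⟨_, hw⟩, rfl⟩ |
    ⟨u, p, q, v, ⟨hp, hq, huq, hpv, huv, hn⟩, rfl⟩ | ⟨x, y, z, w, ⟨hxy, hn, hx, hy, hz, hw⟩, rfl⟩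
  · exact Set.ncard_lt_ncard (del w v ((hw v).2 rfl) rfl) fin
  · have hs := fun a b => G.adj_comm a b
    have hl := fun a => G.irrefl (v := a)
    let E := (gcon G u p q v).edgeSet \ {s(u, v)}
    have hE : E.Finite := hf.subset Set.sdiff_subset
    have hEp : ∀ t, s(p, t) ∉ E := by
      intro t ht
      have h1 : (gcon G u p q v).Adj p t := ht.1
      rw [gcon_adj] at h1
      grind
    have hEq : ∀ t, s(q, t) ∉ E := by
      intro t ht
      have h1 : (gcon G u p q v).Adj q t := ht.1
      rw [gcon_adj] at h1
      grind
    have c1 : E.ncard + 1 = (gcon G u p q v).edgeSet.ncard := by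
      apply Set.ncard_sdiff_singleton_add_one _ hf
      rw [mem_edgeSet, gcon_adj]; grind
    have c2 : (insert s(p, q) E).ncard = E.ncard + 1 := Set.ncard_insert_of_notMem (hEp q) hE
    have c3 : (insert s(p, u) (insert s(p, q) E)).ncard = (insert s(p, q) E).ncard + 1 := by
      apply Set.ncard_insert_of_notMem _ (hE.insert _)
      rw [Set.mem_insert_iff, not_or]
      refine ⟨?_, hEp u⟩
      rw [Sym2.eq_iff]; grind
    have c4 : (insert s(p, u) (insert s(p, q) E)).ncard ≤ G.edgeSet.ncard := by
      apply Set.ncard_le_ncard _ fin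
      rw [Set.insert_subset_iff, Set.insert_subset_iff]
      refine ⟨?_, ?_, ?_⟩
      · rw [mem_edgeSet]; grind
      · rw [mem_edgeSet]; grind
      · rintro e ⟨h1, h2⟩
        induction e with | _ a b =>
        rw [mem_edgeSet, gcon_adj] at h1
        rw [mem_edgeSet]
        rw [Set.mem_singleton_iff, Sym2.eq_iff] at h2
        grind
    omega
  · exact Set.ncard_lt_ncard (del w x ((hw x).2 (Or.inl rfl)) rfl) fin

theorem no_red {A G : SimpleGraph ℕ} (hG : ∀ v ∈ G.support, Big G v) (h : OpFwd A G) : False := by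
  rcases opFwd_cases h with ⟨v, w, ⟨_, hw⟩, rfl⟩ |
    ⟨u, p, q, v, ⟨hp, hq, huq, hpv, huv, hn⟩, rfl⟩ | ⟨x, y, z, w, ⟨hxy, hn, hx, hy, hz, hw⟩, rfl⟩
  · obtain ⟨r, s, t, h⟩ := hG w ⟨v, (hw v).2 rfl⟩; grind
  · obtain ⟨r, s, t, h⟩ := hG p ⟨u, (hp u).2 (Or.inl rfl)⟩; grind
  · obtain ⟨r, s, t, h⟩ := hG w ⟨x, (hw x).2 (Or.inl rfl)⟩; grind

theorem C_inv {H G : SimpleGraph ℕ} (hfin : H.edgeSet.Finite) (hbip : Bip H)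
    (hbig : ∀ v ∈ H.support, Big H v) (h : Relation.ReflTransGen OpFwd H G) :
    G.edgeSet.Finite ∧ Bip G ∧ ∀ v ∈ H.support, Big G v := by
  induction h with
  | refl => exact ⟨hfin, hbip, hbig⟩
  | tail _ h ih =>
    exact ⟨(edges_mono h ih.1).1, bip_mono h ih.2.1, fun v hv => big_mono h (ih.2.2 v hv)⟩

theorem C_comap {H G : SimpleGraph ℕ} (σ : Equiv.Perm ℕ) (hσ : ∀ v ∈ H.support, σ v = v)
    (h : Relation.ReflTransGen OpFwd H G) : Relation.ReflTransGen OpFwd H (G.comap σ) := by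
  induction h with
  | refl =>
    have : H.comap σ = H := by
      have hσ' : ∀ v, σ v ∈ H.support → σ v = v := fun v hv => σ.injective (hσ _ hv)
      ext a b
      rw [comap_adj]
      constructor
      · intro h
        have h1 := hσ' a ⟨_, h⟩
        have h2 := hσ' b ⟨_, h.symm⟩
        rwa [h1, h2] at h
      · intro h
        have h1 := hσ a ⟨_, h⟩
        have h2 := hσ b ⟨_, h.symm⟩
        rwa [h1, h2]
    rw [this]
  | tail _ h ih => exact ih.tail (opFwd_comap σ h)

theorem C_red {H : SimpleGraph ℕ} (hfin : H.edgeSet.Finite) (hbip : Bip H)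
    (hbig : ∀ v ∈ H.support, Big H v) (n : ℕ) : ∀ G, Relation.ReflTransGen OpFwd H G →
    G.edgeSet.ncard < n → ∀ B, OpFwd B G → Relation.ReflTransGen OpFwd H B := by
  induction n with
  | zero => intro G _ h; omega
  | succ n ih =>
    intro G hG hn B hB
    obtain ⟨_, gb, gbig⟩ := C_inv hfin hbip hbig hG
    rcases Relation.ReflTransGen.cases_tail hG with rfl | ⟨A, hA, hAG⟩
    · exact (no_red hbig hB).elim
    obtain ⟨A', B', σ, h1, h2, h3, h4⟩ := (join_all gb hB hAG)
    have af := (C_inv hfin hbip hbig hA).1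
    have alt := (edges_mono hAG af).2
    have key : ∀ X, Relation.ReflTransGen OpFwd X A → Relation.ReflTransGen OpFwd H X ∧
        X.edgeSet.ncard < n := by
      intro X hX
      induction hX using Relation.ReflTransGen.head_induction_on with
      | refl => exact ⟨hA, by omega⟩
      | head hab _ ihX =>
        have hx := ih _ ihX.1 ihX.2 _ hab
        exact ⟨hx, (edges_mono hab (C_inv hfin hbip hbig hx).1).2.trans ihX.2⟩
    have := C_comap σ (fun v hv => h3 v (gbig v hv)) (key B' h2).1
    rw [← h4] at this
    exact this.trans h1

/-- If `H` is bipartite with finitely many edges, every support vertex of `H` has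
degree at least `3`, and `H' ≠ H` is obtained from `H` by a finite sequence of
operations (I), (II), (III), (I'), (II'), (III'), then `H'` has strictly more
edges than `H`. -/
theorem stmt_7 (H H' : SimpleGraph ℕ) (hfin : H.edgeSet.Finite)
    (hbip : H.Colorable 2)
    (hdeg : ∀ v ∈ H.support, 3 ≤ (H.neighborSet v).ncard)
    (hne : H' ≠ H) (h : Relation.ReflTransGen OpAny H H') :
    H.edgeSet.ncard < H'.edgeSet.ncard := by
  classical
  have hb : Bip H := by
    obtain ⟨C⟩ := hbip
    refine ⟨fun a => decide (C a = 0), fun a b hab => ?_⟩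
    have hv := C.valid hab
    have : C a ≠ C b := hv
    simp only [ne_eq, decide_eq_decide]
    omega
  have hbig : ∀ v ∈ H.support, Big H v := by
    intro v hv
    have h3 := hdeg v hv
    obtain ⟨t, ht, hc⟩ := Set.exists_subset_card_eq h3
    obtain ⟨r, s, t', h1, h2, h3, rfl⟩ := Set.ncard_eq_three.1 hc
    exact ⟨r, s, t', h1, h2, h3, ht (by simp), ht (by simp), ht (by simp)⟩
  have hC : Relation.ReflTransGen OpFwd H H' := by
    clear hne
    induction h with
    | refl => exact .refl
    | tail _ h ih =>
      rcases h with h | h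
      · exact ih.tail h
      · exact C_red hfin hb hbig _ _ ih (Nat.lt_succ_self _) _ h
  clear h
  have : H' = H ∨ H.edgeSet.ncard < H'.edgeSet.ncard := by
    clear hne
    induction hC with
    | refl => exact Or.inl rfl
    | tail hG h ih =>
      right
      have := (edges_mono h (C_inv hfin hb hbig hG).1).2
      rcases ih with rfl | ih
      · exact this
      · exact ih.trans this
  exact this.resolve_left hne
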